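/- arXiv:2001.10016 — 2 statements merged into one kernel-verified Lean document; each statement's English description precedes it below -/
import Mathlib

section
/- There exist a set S of nonnegative integers and a sequence θ_j ∈ (0,1/2), j ≥ 0, such that, with Θ_k = θ_0 θ_1 ⋯ θ_{k−1}: (a) Θ_k^{1/k} → 1/2 as k → ∞; (b) there exists ε > 0 such that θ_j, θ_{j+1} ∈ (ε, 1/2 − ε) for infinitely many j ∈ S with j+1 ∈ S; and (c) for every p ∈ (1,2], ∫_0^∞ ( ∑_{k∈S} 2^k Θ_k / (1 + (1−2θ_k) Θ_k ξ) · ∏_{j=0}^{k−1} |cos((1−θ_j) Θ_j π ξ)| )^p dξ < ∞. -/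
open MeasureTheory Filter
open scoped ENNReal Real

/-- `Θ_k = θ_0 θ_1 ⋯ θ_{k-1}`. -/
noncomputable def Theta (θ : ℕ → ℝ) (k : ℕ) : ℝ := ∏ j ∈ Finset.range k, θ j

/-- The majorant `H(ξ) = ∑_{k∈S} 2^k Θ_k / (1 + (1-2θ_k) Θ_k ξ) ∏_{j<k} |cos((1-θ_j) Θ_j π ξ)|`. -/
noncomputable def Hfun (θ : ℕ → ℝ) (S : Set ℕ) (ξ : ℝ) : ℝ :=
  ∑' k : S, 2 ^ (k : ℕ) * Theta θ k / (1 + (1 - 2 * θ (k : ℕ)) * Theta θ k * ξ) *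
    ∏ j ∈ Finset.range (k : ℕ), |Real.cos ((1 - θ j) * Theta θ j * π * ξ)|

namespace Dissect

/-- the weight `w_i = 1 - 1/(i+4)` -/
noncomputable def w (i : ℕ) : ℝ := 1 - 1 / ((i : ℝ) + 4)

/-- the ratios -/
noncomputable def th (j : ℕ) : ℝ :=
  (2 ^ ((j.sqrt + 1) ^ 2 - 1 - j) - w j.sqrt) / (2 ^ ((j.sqrt + 1) ^ 2 - 1 - j + 1) - w j.sqrt)

/-- base frequency of block `i` -/
noncomputable def ee (i : ℕ) : ℝ := Theta th (i ^ 2) / (2 ^ (2 * i + 1) - w i)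

/-- the cosine product -/
noncomputable def P (k : ℕ) (ξ : ℝ) : ℝ :=
  ∏ j ∈ Finset.range k, |Real.cos ((1 - th j) * Theta th j * π * ξ)|

lemma w_lt (i : ℕ) : w i < 1 := by
  unfold w
  have : (0 : ℝ) < 1 / ((i : ℝ) + 4) := by positivity
  linarith

lemma w_ge (i : ℕ) : 3 / 4 ≤ w i := by
  unfold w
  have : 1 / ((i : ℝ) + 4) ≤ 1 / 4 := by
    apply one_div_le_one_div_of_le (by norm_num)
    have : (0 : ℝ) ≤ i := by positivity
    linarith
  linarith

lemma one_le_two_pow' (n : ℕ) : (1 : ℝ) ≤ 2 ^ n := one_le_pow₀ (by norm_num)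

lemma pow_sub_w_pos (n i : ℕ) : 0 < (2 : ℝ) ^ n - w i := by
  have := one_le_two_pow' n
  have := w_lt i
  linarith

lemma th_mem (j : ℕ) : th j ∈ Set.Ioo (0 : ℝ) (1 / 2) := by
  unfold th
  set r := (j.sqrt + 1) ^ 2 - 1 - j
  have h1 := pow_sub_w_pos r j.sqrt
  have h2 := pow_sub_w_pos (r + 1) j.sqrt
  have h3 := w_ge j.sqrt
  refine ⟨div_pos h1 h2, ?_⟩
  rw [div_lt_iff₀ h2, pow_succ]
  linarith

lemma sqrt_block (i l : ℕ) (hl : l ≤ 2 * i) : (i ^ 2 + l).sqrt = i :=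
  Nat.sqrt_add_eq' i (by omega)

lemma th_block (i l : ℕ) (hl : l ≤ 2 * i) :
    th (i ^ 2 + l) = (2 ^ (2 * i - l) - w i) / (2 ^ (2 * i + 1 - l) - w i) := by
  unfold th
  rw [sqrt_block i l hl]
  have h1 : (i + 1) ^ 2 - 1 - (i ^ 2 + l) = 2 * i - l := by
    have : (i + 1) ^ 2 = i ^ 2 + 2 * i + 1 := by ring
    omega
  have h2 : 2 * i - l + 1 = 2 * i + 1 - l := by omega
  rw [h1, h2]

lemma Theta_succ (k : ℕ) : Theta th (k + 1) = Theta th k * th k := by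
  unfold Theta; rw [Finset.prod_range_succ]

lemma Theta_pos (k : ℕ) : 0 < Theta th k :=
  Finset.prod_pos fun j _ => (th_mem j).1

lemma ee_pos (i : ℕ) : 0 < ee i := div_pos (Theta_pos _) (pow_sub_w_pos _ _)

lemma Theta_block (i l : ℕ) (hl : l ≤ 2 * i + 1) :
    Theta th (i ^ 2 + l) = ee i * (2 ^ (2 * i + 1 - l) - w i) := by
  induction l with
  | zero =>
    have := (pow_sub_w_pos (2 * i + 1) i).ne'
    simp only [ee, add_zero, Nat.sub_zero]
    field_simp
  | succ l ih =>
    rw [← add_assoc, Theta_succ, ih (by omega), th_block i l (by omega)]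
    have h2 : 2 * i + 1 - (l + 1) = 2 * i - l := by omega
    have := (pow_sub_w_pos (2 * i + 1 - l) i).ne'
    rw [h2]
    field_simp

lemma freq_block (i l : ℕ) (hl : l ≤ 2 * i) :
    (1 - th (i ^ 2 + l)) * Theta th (i ^ 2 + l) = ee i * 2 ^ (2 * i - l) := by
  have h1 := Theta_succ (i ^ 2 + l)
  rw [add_assoc, Theta_block i (l + 1) (by omega)] at h1
  have h2 := Theta_block i l (by omega)
  have h3 : 2 * i + 1 - (l + 1) = 2 * i - l := by omega
  have h4 : 2 * i + 1 - l = 2 * i - l + 1 := by omega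
  rw [h3] at h1
  rw [h4, pow_succ (2 : ℝ)] at h2
  linear_combination h2 + h1

lemma one_sub_two_block (i l : ℕ) (hl : l ≤ 2 * i) :
    (1 - 2 * th (i ^ 2 + l)) * Theta th (i ^ 2 + l) = ee i * w i := by
  have h1 := Theta_succ (i ^ 2 + l)
  rw [add_assoc, Theta_block i (l + 1) (by omega)] at h1
  have h2 := Theta_block i l (by omega)
  have h3 : 2 * i + 1 - (l + 1) = 2 * i - l := by omega
  have h4 : 2 * i + 1 - l = 2 * i - l + 1 := by omega
  rw [h3] at h1
  rw [h4, pow_succ (2 : ℝ)] at h2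
  linear_combination h2 + 2 * h1

lemma Theta_sq_succ (i : ℕ) : Theta th ((i + 1) ^ 2) = ee i / ((i : ℝ) + 4) := by
  have h : (i + 1) ^ 2 = i ^ 2 + (2 * i + 1) := by ring
  rw [h, Theta_block i _ le_rfl, Nat.sub_self, pow_zero, w]
  ring

/-- normalized lengths -/
noncomputable def A (k : ℕ) : ℝ := 2 ^ k * Theta th k

lemma A_pos (k : ℕ) : 0 < A k := mul_pos (by positivity) (Theta_pos k)

lemma A_anti : Antitone A := by
  apply antitone_nat_of_succ_le
  intro k
  unfold A
  rw [Theta_succ, pow_succ]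
  have h1 := (th_mem k).2
  have h2 : 0 < 2 ^ k * Theta th k := A_pos k
  nlinarith

noncomputable def Q (i : ℕ) : ℝ := ∏ j ∈ Finset.range i, ((j : ℝ) + 4)

lemma Q_succ (i : ℕ) : Q (i + 1) = Q i * ((i : ℝ) + 4) := by
  unfold Q; rw [Finset.prod_range_succ]

lemma Q_pos (i : ℕ) : 0 < Q i := Finset.prod_pos fun j _ => by positivity

lemma A_sq_step (i : ℕ) : A (i ^ 2) / ((i : ℝ) + 4) ≤ A ((i + 1) ^ 2) ∧
    A ((i + 1) ^ 2) ≤ 2 * A (i ^ 2) / ((i : ℝ) + 4) := by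
  have h : (i + 1) ^ 2 = i ^ 2 + (2 * i + 1) := by ring
  have e1 : A (i ^ 2) = 2 ^ (i ^ 2) * (ee i * (2 ^ (2 * i + 1) - w i)) := by
    have := Theta_block i 0 (by omega)
    simp only [add_zero, Nat.sub_zero] at this
    rw [A, this]
  have e2 : A ((i + 1) ^ 2) = 2 ^ (i ^ 2) * 2 ^ (2 * i + 1) * (ee i / ((i : ℝ) + 4)) := by
    rw [A, Theta_sq_succ, h, pow_add]
  have hw := w_lt i
  have hw' := w_ge i
  have h2 : (2 : ℝ) ≤ 2 ^ (2 * i + 1) := by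
    rw [pow_succ]; linarith [one_le_two_pow' (2 * i)]
  have hp : 0 < (2 : ℝ) ^ (i ^ 2) * ee i := mul_pos (by positivity) (ee_pos i)
  have h4 : (0 : ℝ) < (i : ℝ) + 4 := by positivity
  rw [e2, ← mul_div_assoc]
  constructor
  · apply div_le_div_of_nonneg_right _ h4.le
    rw [e1]; nlinarith
  · apply div_le_div_of_nonneg_right _ h4.le
    rw [e1]; nlinarith

lemma A_sq_bounds (i : ℕ) : 1 / Q i ≤ A (i ^ 2) ∧ A (i ^ 2) ≤ 2 ^ i / Q i := by
  induction i with
  | zero => simp [Q, A, Theta]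
  | succ i ih =>
    have h4 : (0 : ℝ) < (i : ℝ) + 4 := by positivity
    have hQ := Q_pos i
    obtain ⟨h1, h2⟩ := A_sq_step i
    constructor
    · refine le_trans ?_ h1
      rw [Q_succ, ← div_div]
      exact div_le_div_of_nonneg_right ih.1 h4.le
    · refine h2.trans ?_
      rw [Q_succ, ← div_div]
      apply div_le_div_of_nonneg_right _ h4.le
      calc 2 * A (i ^ 2) ≤ 2 * (2 ^ i / Q i) := by linarith [ih.2]
        _ = _ := by rw [pow_succ]; ring

lemma Q_le (i : ℕ) : Q i ≤ ((i : ℝ) + 4) ^ i := by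
  unfold Q
  calc _ ≤ ∏ j ∈ Finset.range i, ((i : ℝ) + 4) := by
        apply Finset.prod_le_prod
        · intros; positivity
        · intro j hj
          have : (j : ℝ) ≤ i := by exact_mod_cast (Finset.mem_range.1 hj).le
          linarith
    _ = _ := by simp

lemma fact_le_Q (i : ℕ) : (i.factorial : ℝ) ≤ Q i := by
  induction i with
  | zero => simp [Q]
  | succ i ih =>
    rw [Q_succ, Nat.factorial_succ]
    push_cast
    have : (0 : ℝ) ≤ i := by positivity
    have := Q_pos i
    nlinarith

lemma A_le_one (k : ℕ) : A k ≤ 1 := by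
  have := A_anti (Nat.zero_le k)
  simpa [A, Theta] using this

lemma A_ge (k : ℕ) : 1 / ((k.sqrt : ℝ) + 5) ^ (k.sqrt + 1) ≤ A k := by
  have h0 : k ≤ (k.sqrt + 1) ^ 2 := (Nat.lt_succ_sqrt' k).le
  have h1 := A_anti h0
  refine le_trans ?_ h1
  refine le_trans ?_ (A_sq_bounds _).1
  apply one_div_le_one_div_of_le (Q_pos _)
  refine (Q_le _).trans (le_of_eq ?_)
  push_cast
  ring

lemma tendsto_a : Tendsto (fun k : ℕ => Theta th k ^ ((1 : ℝ) / k)) atTop (nhds (1 / 2)) := by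
  have hs : Tendsto Nat.sqrt atTop atTop := by
    apply tendsto_atTop.2
    intro b
    filter_upwards [eventually_ge_atTop (b ^ 2)] with k hk
    exact Nat.le_sqrt'.2 hk
  have hlim : Tendsto (fun i : ℕ => ((i : ℝ) + 1) * Real.log ((i : ℝ) + 5) / (i : ℝ) ^ 2)
      atTop (nhds 0) := by
    have h1 : Tendsto (fun x : ℝ => Real.log x / x) atTop (nhds 0) :=
      Real.isLittleO_log_id_atTop.tendsto_div_nhds_zero
    have h2 : Tendsto (fun i : ℕ => (i : ℝ) + 5) atTop atTop :=
      tendsto_atTop_add_const_right _ _ tendsto_natCast_atTop_atTop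
    have h3 := (h1.comp h2).const_mul 12
    rw [mul_zero] at h3
    refine squeeze_zero' ?_ ?_ h3
    · filter_upwards with i
      have : 0 ≤ Real.log ((i : ℝ) + 5) := Real.log_nonneg (by linarith [(Nat.cast_nonneg i : (0:ℝ) ≤ i)])
      positivity
    · filter_upwards [eventually_ge_atTop 1] with i hi
      have hi' : (1 : ℝ) ≤ i := by exact_mod_cast hi
      have : 0 ≤ Real.log ((i : ℝ) + 5) := Real.log_nonneg (by linarith)
      simp only [Function.comp]
      rw [← mul_div_assoc, div_le_div_iff₀ (by positivity) (by positivity)]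
      have : ((i : ℝ) + 1) * ((i : ℝ) + 5) ≤ 12 * (i : ℝ) ^ 2 := by nlinarith
      nlinarith
  have hA : Tendsto (fun k : ℕ => A k ^ ((1 : ℝ) / k)) atTop (nhds 1) := by
    have hlo : Tendsto (fun k : ℕ => Real.exp (-(((k.sqrt : ℝ) + 1) * Real.log ((k.sqrt : ℝ) + 5) /
        (k.sqrt : ℝ) ^ 2))) atTop (nhds 1) := by
      have := (hlim.comp hs).neg.rexp
      simpa [Function.comp_def] using this
    refine tendsto_of_tendsto_of_tendsto_of_le_of_le' hlo tendsto_const_nhds ?_ ?_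
    · filter_upwards [eventually_ge_atTop 1] with k hk
      have hsq : (1 : ℝ) ≤ k.sqrt := by exact_mod_cast Nat.le_sqrt'.2 (by simpa using hk)
      have hk' : (0 : ℝ) < k := by exact_mod_cast hk
      have hk2 : (k.sqrt : ℝ) ^ 2 ≤ k := by exact_mod_cast Nat.sqrt_le' k
      have hl : 0 ≤ Real.log ((k.sqrt : ℝ) + 5) := Real.log_nonneg (by linarith)
      rw [Real.rpow_def_of_pos (A_pos k)]
      apply Real.exp_le_exp.2
      have h := Real.log_le_log (by positivity) (A_ge k)
      rw [one_div, Real.log_inv, Real.log_pow] at h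
      push_cast at h
      have h5 : ((k.sqrt : ℝ) + 1) * Real.log ((k.sqrt : ℝ) + 5) / k ≤
          ((k.sqrt : ℝ) + 1) * Real.log ((k.sqrt : ℝ) + 5) / (k.sqrt : ℝ) ^ 2 := by
        apply div_le_div_of_nonneg_left (by positivity) (by positivity) hk2
      have h6 : -(((k.sqrt : ℝ) + 1) * Real.log ((k.sqrt : ℝ) + 5)) / k ≤ Real.log (A k) / k :=
        div_le_div_of_nonneg_right h hk'.le
      rw [neg_div] at h6
      rw [mul_one_div]
      linarith
    · filter_upwards with k
      exact Real.rpow_le_one (A_pos k).le (A_le_one k) (by positivity)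
  have := hA.const_mul (1 / 2)
  rw [mul_one] at this
  refine this.congr' ?_
  filter_upwards [eventually_ge_atTop 1] with k hk
  have hk' : (k : ℝ) ≠ 0 := by exact_mod_cast (by omega : k ≠ 0)
  unfold A
  rw [Real.mul_rpow (by positivity) (Theta_pos k).le, ← Real.rpow_natCast, ← Real.rpow_mul (by norm_num),
    mul_one_div_cancel hk', Real.rpow_one]
  ring

lemma P_nonneg (k : ℕ) (ξ : ℝ) : 0 ≤ P k ξ := Finset.prod_nonneg fun _ _ => abs_nonneg _

lemma P_le_one (k : ℕ) (ξ : ℝ) : P k ξ ≤ 1 :=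
  Finset.prod_le_one (fun _ _ => abs_nonneg _) fun _ _ => Real.abs_cos_le_one _

lemma P_meas (k : ℕ) : Measurable (P k) := by
  unfold P
  exact Finset.measurable_fun_prod _ fun j _ => by fun_prop

lemma cos_prod (n : ℕ) (y : ℝ) :
    (∏ r ∈ Finset.range n, |Real.cos (2 ^ r * y)|) * (2 ^ n * |Real.sin y|) =
      |Real.sin (2 ^ n * y)| := by
  induction n with
  | zero => simp
  | succ n ih =>
    rw [Finset.prod_range_succ]
    have : (2 : ℝ) ^ (n + 1) * y = 2 * (2 ^ n * y) := by ring
    rw [this, Real.sin_two_mul, abs_mul, abs_mul, ← ih, abs_two]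
    ring

lemma P_split (i n s : ℕ) (h : n + s = 2 * i + 1) (ξ : ℝ) :
    P (i ^ 2 + n) ξ =
      P (i ^ 2) ξ * ∏ r ∈ Finset.range n, |Real.cos (2 ^ r * (ee i * 2 ^ s * π * ξ))| := by
  unfold P
  rw [Finset.prod_range_add]
  congr 1
  rw [← Finset.prod_range_reflect]
  apply Finset.prod_congr rfl
  intro r hr
  have hr := Finset.mem_range.1 hr
  rw [freq_block i _ (by omega)]
  have : 2 * i - (n - 1 - r) = r + s := by omega
  rw [this, pow_add]
  congr 2
  ring

/-- decay of the Dirichlet-type product around the lattice -/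
lemma D_bound (n : ℕ) (f T : ℝ) (hf : 0 < f) (hT : 0 < T) (hfT : T ≤ 2 ^ n * f) (c : ℤ) (ξ : ℝ)
    (hξ : |ξ - c / f| ≤ 1 / (2 * f)) :
    ∏ r ∈ Finset.range n, |Real.cos (2 ^ r * (f * π * ξ))| ≤ 2 / (1 + |ξ - c / f| * T) := by
  set D := ∏ r ∈ Finset.range n, |Real.cos (2 ^ r * (f * π * ξ))| with hD
  set t := ξ - c / f with ht
  have hD0 : 0 ≤ D := Finset.prod_nonneg fun _ _ => abs_nonneg _
  have hD1 : D ≤ 1 := Finset.prod_le_one (fun _ _ => abs_nonneg _) fun _ _ => Real.abs_cos_le_one _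
  have h1 := cos_prod n (f * π * ξ)
  rw [← hD] at h1
  have hsin : |Real.sin (f * π * ξ)| = |Real.sin (f * π * t)| := by
    have : f * π * t = f * π * ξ - c * π := by
      rw [ht]; field_simp
    rw [this, Real.sin_sub_int_mul_pi, abs_mul]
    simp
  have hj : 2 / π * |f * π * t| ≤ |Real.sin (f * π * t)| := by
    apply Real.mul_abs_le_abs_sin
    rw [abs_mul, abs_of_pos (by positivity)]
    calc f * π * |t| ≤ f * π * (1 / (2 * f)) := by gcongr
      _ = π / 2 := by field_simp
  rw [abs_mul, abs_of_pos (by positivity : 0 < f * π)] at hj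
  have hj' : 2 / π * (f * π * |t|) = 2 * f * |t| := by field_simp
  rw [hj', ← hsin] at hj
  have h2 : D * (2 ^ n * (2 * f * |t|)) ≤ 1 := by
    refine le_trans ?_ (Real.abs_sin_le_one (2 ^ n * (f * π * ξ)))
    rw [← h1]
    gcongr
  have hy : 0 ≤ |t| * T := by positivity
  have h3 : D * (|t| * T) ≤ 1 := by
    refine le_trans ?_ h2
    apply mul_le_mul_of_nonneg_left _ hD0
    have := abs_nonneg t
    have : |t| * T ≤ |t| * (2 ^ n * f) := by gcongr
    have : 0 ≤ |t| * (2 ^ n * f) := by positivity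
    linarith
  rw [le_div_iff₀ (by positivity)]
  linarith


lemma half_right (F ψ : ℝ → ℝ≥0∞) (c : ℕ → ℝ≥0∞) (a h : ℝ) (hh : 0 < h) (B : ℝ≥0∞)
    (hB : ∀ x, ∫⁻ ξ in Set.Ioc x (x + h), F ξ ≤ B) (hc : ∀ m, c m ≠ ⊤)
    (hψ : ∀ (m : ℕ) (ξ : ℝ), a + m * h < ξ → ψ ξ ≤ c m) :
    ∫⁻ ξ in Set.Ioi a, F ξ * ψ ξ ≤ B * ∑' m, c m := by
  have hcov : Set.Ioi a ⊆ ⋃ m : ℕ, Set.Ioc (a + m * h) (a + m * h + h) := by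
    intro ξ hξ
    have hξ : a < ξ := hξ
    have hy : 0 < (ξ - a) / h := div_pos (by linarith) hh
    obtain ⟨m, hm⟩ : ∃ m : ℕ, ⌈(ξ - a) / h⌉₊ = m + 1 :=
      Nat.exists_eq_succ_of_ne_zero (Nat.ceil_pos.2 hy).ne'
    have h1 : (ξ - a) / h ≤ (m : ℝ) + 1 := by
      have := Nat.le_ceil ((ξ - a) / h)
      rw [hm] at this; exact_mod_cast this
    have h2 : (m : ℝ) < (ξ - a) / h := by
      apply Nat.lt_ceil.1; omega
    rw [div_le_iff₀ hh] at h1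
    rw [lt_div_iff₀ hh] at h2
    exact Set.mem_iUnion.2 ⟨m, by linarith, by linarith⟩
  calc ∫⁻ ξ in Set.Ioi a, F ξ * ψ ξ
      ≤ ∫⁻ ξ in ⋃ m : ℕ, Set.Ioc (a + m * h) (a + m * h + h), F ξ * ψ ξ := lintegral_mono_set hcov
    _ ≤ ∑' m : ℕ, ∫⁻ ξ in Set.Ioc (a + m * h) (a + m * h + h), F ξ * ψ ξ := lintegral_iUnion_le _ _
    _ ≤ ∑' m : ℕ, B * c m := by
        apply ENNReal.tsum_le_tsum
        intro m
        calc _ ≤ ∫⁻ ξ in Set.Ioc (a + m * h) (a + m * h + h), F ξ * c m := by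
              apply setLIntegral_mono' measurableSet_Ioc
              intro ξ hξ
              exact mul_le_mul_right (hψ m ξ hξ.1) _
          _ = (∫⁻ ξ in Set.Ioc (a + m * h) (a + m * h + h), F ξ) * c m := lintegral_mul_const' _ _ (hc m)
          _ ≤ _ := mul_le_mul_left (hB _) _
    _ = _ := ENNReal.tsum_mul_left

lemma half_left (F ψ : ℝ → ℝ≥0∞) (c : ℕ → ℝ≥0∞) (a h : ℝ) (hh : 0 < h) (B : ℝ≥0∞)
    (hB : ∀ x, ∫⁻ ξ in Set.Ioc x (x + h), F ξ ≤ B) (hc : ∀ m, c m ≠ ⊤)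
    (hψ : ∀ (m : ℕ) (ξ : ℝ), ξ ≤ a - m * h → ψ ξ ≤ c m) :
    ∫⁻ ξ in Set.Iic a, F ξ * ψ ξ ≤ B * ∑' m, c m := by
  have hcov : Set.Iic a ⊆ ⋃ m : ℕ, Set.Ioc (a - m * h - h) (a - m * h - h + h) := by
    intro ξ hξ
    have hξ : ξ ≤ a := hξ
    have hy : 0 ≤ (a - ξ) / h := div_nonneg (by linarith) hh.le
    have h1 := Nat.lt_floor_add_one ((a - ξ) / h)
    have h2 := Nat.floor_le hy
    rw [div_lt_iff₀ hh] at h1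
    rw [le_div_iff₀ hh] at h2
    exact Set.mem_iUnion.2 ⟨⌊(a - ξ) / h⌋₊, by linarith, by linarith⟩
  calc ∫⁻ ξ in Set.Iic a, F ξ * ψ ξ
      ≤ ∫⁻ ξ in ⋃ m : ℕ, Set.Ioc (a - m * h - h) (a - m * h - h + h), F ξ * ψ ξ :=
        lintegral_mono_set hcov
    _ ≤ ∑' m : ℕ, ∫⁻ ξ in Set.Ioc (a - m * h - h) (a - m * h - h + h), F ξ * ψ ξ :=
        lintegral_iUnion_le _ _
    _ ≤ ∑' m : ℕ, B * c m := by
        apply ENNReal.tsum_le_tsum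
        intro m
        calc _ ≤ ∫⁻ ξ in Set.Ioc (a - m * h - h) (a - m * h - h + h), F ξ * c m := by
              apply setLIntegral_mono' measurableSet_Ioc
              intro ξ hξ
              have := hξ.2
              exact mul_le_mul_right (hψ m ξ (by linarith)) _
          _ = (∫⁻ ξ in Set.Ioc (a - m * h - h) (a - m * h - h + h), F ξ) * c m :=
              lintegral_mul_const' _ _ (hc m)
          _ ≤ _ := mul_le_mul_left (hB _) _
    _ = _ := ENNReal.tsum_mul_left

/-- `∑ (1+a)^{-p}` -/
noncomputable def zt (p : ℝ) : ℝ≥0∞ := ∑' a : ℕ, ENNReal.ofReal ((1 / (1 + (a : ℝ))) ^ p)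

lemma zt_ne_top (p : ℝ) (hp : 1 < p) : zt p ≠ ⊤ := by
  unfold zt
  have h : Summable (fun a : ℕ => (1 / (1 + (a : ℝ))) ^ p) := by
    have h1 : Summable (fun n : ℕ => 1 / (n : ℝ) ^ p) := Real.summable_one_div_nat_rpow.2 hp
    have h2 := (summable_nat_add_iff 1).2 h1
    refine h2.congr ?_
    intro a
    rw [Real.div_rpow (by norm_num) (by positivity), Real.one_rpow]
    push_cast
    rw [add_comm (a : ℝ)]
  rw [← ENNReal.ofReal_tsum_of_nonneg (fun a => by positivity) h]
  exact ENNReal.ofReal_ne_top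

lemma sum_group (p : ℝ) (hp : 0 ≤ p) (q : ℕ) (hq : 0 < q) :
    ∑' m : ℕ, ENNReal.ofReal ((2 / (1 + (m : ℝ) / q)) ^ p) ≤
      q * (ENNReal.ofReal (2 ^ p) * zt p) := by
  have : NeZero q := ⟨hq.ne'⟩
  have hq' : (0 : ℝ) < q := by exact_mod_cast hq
  calc _ ≤ ∑' m : ℕ, ENNReal.ofReal ((2 / (1 + ((m / q : ℕ) : ℝ))) ^ p) := by
        apply ENNReal.tsum_le_tsum
        intro m
        apply ENNReal.ofReal_le_ofReal
        apply Real.rpow_le_rpow (by positivity) _ hp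
        apply div_le_div_of_nonneg_left (by norm_num) (by positivity)
        have : ((m / q : ℕ) : ℝ) ≤ (m : ℝ) / q := Nat.cast_div_le
        linarith
    _ = ∑' x : ℕ × Fin q, ENNReal.ofReal ((2 / (1 + (x.1 : ℝ))) ^ p) := by
        rw [← (Nat.divModEquiv q).tsum_eq]
        rfl
    _ = ∑' a : ℕ, q * (ENNReal.ofReal (2 ^ p) * ENNReal.ofReal ((1 / (1 + (a : ℝ))) ^ p)) := by
        rw [ENNReal.tsum_prod']
        congr 1
        ext a
        simp only [tsum_fintype, Finset.sum_const, Finset.card_univ, Fintype.card_fin, nsmul_eq_mul]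
        rw [← ENNReal.ofReal_mul (by positivity), ← Real.mul_rpow (by norm_num) (by positivity),
          mul_one_div]
    _ = _ := by rw [ENNReal.tsum_mul_left, ENNReal.tsum_mul_left, zt]

lemma full_bound (p : ℝ) (hp : 1 < p) (F : ℝ → ℝ≥0∞) (a h T : ℝ) (hh : 0 < h) (q : ℕ) (hq : 0 < q)
    (hT : T * h = 1 / q) (B : ℝ≥0∞)
    (hB : ∀ x, ∫⁻ ξ in Set.Ioc x (x + h), F ξ ≤ B) :
    ∫⁻ ξ, F ξ * ENNReal.ofReal ((2 / (1 + |ξ - a| * T)) ^ p) ≤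
      2 * (B * (q * (ENNReal.ofReal (2 ^ p) * zt p))) := by
  have hq' : (0 : ℝ) < q := by exact_mod_cast hq
  have hT0 : 0 < T := by
    have : 0 < T * h := by rw [hT]; positivity
    exact pos_of_mul_pos_left this hh.le
  have key : ∀ (m : ℕ) (ξ : ℝ), m * h ≤ |ξ - a| →
      ENNReal.ofReal ((2 / (1 + |ξ - a| * T)) ^ p) ≤ ENNReal.ofReal ((2 / (1 + (m : ℝ) / q)) ^ p) := by
    intro m ξ hm
    apply ENNReal.ofReal_le_ofReal
    apply Real.rpow_le_rpow (by positivity) _ (by linarith)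
    apply div_le_div_of_nonneg_left (by norm_num) (by positivity)
    have : (m : ℝ) / q = m * h * T := by
      rw [mul_assoc, mul_comm h, hT, mul_one_div]
    rw [this]
    gcongr
  have hS := mul_le_mul_right (sum_group p (by linarith) q hq) B
  have h1 := half_right F (fun ξ => ENNReal.ofReal ((2 / (1 + |ξ - a| * T)) ^ p))
    (fun m => ENNReal.ofReal ((2 / (1 + (m : ℝ) / q)) ^ p)) a h hh B hB
    (fun m => ENNReal.ofReal_ne_top)
    (fun m ξ hm => key m ξ (le_trans (by linarith) (le_abs_self _)))
  have h2 := half_left F (fun ξ => ENNReal.ofReal ((2 / (1 + |ξ - a| * T)) ^ p))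
    (fun m => ENNReal.ofReal ((2 / (1 + (m : ℝ) / q)) ^ p)) a h hh B hB
    (fun m => ENNReal.ofReal_ne_top)
    (fun m ξ hm => key m ξ (le_trans (by linarith) (neg_le_abs _)))
  rw [← setLIntegral_univ, ← Set.Iic_union_Ioi (a := a)]
  refine (lintegral_union_le _ _ _).trans ?_
  rw [two_mul]
  exact add_le_add (h2.trans hS) (h1.trans hS)

noncomputable def K (p : ℝ) : ℝ≥0∞ := 4 * (ENNReal.ofReal (2 ^ p) * zt p)

lemma step (p : ℝ) (hp : 1 < p) (i n s : ℕ) (hns : n + s = 2 * (i + 1) + 1) (B : ℝ≥0∞)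
    (hB : ∀ x, ∫⁻ ξ in Set.Ioc x (x + 1 / ee i), ENNReal.ofReal (P ((i + 1) ^ 2) ξ ^ p) ≤ B) (x : ℝ) :
    ∫⁻ ξ in Set.Ioc x (x + 1 / (ee (i + 1) * 2 ^ s)),
      ENNReal.ofReal (P ((i + 1) ^ 2 + n) ξ ^ p) ≤ B * (((i + 4 : ℕ) : ℝ≥0∞) * K p) := by
  set f := ee (i + 1) * 2 ^ s with hf
  have hf0 : 0 < f := mul_pos (ee_pos _) (by positivity)
  set T := Theta th ((i + 1) ^ 2) with hT
  have hT0 : 0 < T := Theta_pos _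
  have hTh : T * (1 / ee i) = 1 / ((i + 4 : ℕ) : ℝ) := by
    rw [hT, Theta_sq_succ]
    have := (ee_pos i).ne'
    push_cast
    field_simp
  have hTf : T ≤ 2 ^ n * f := by
    have h1 := Theta_block (i + 1) 0 (by omega)
    simp only [add_zero, Nat.sub_zero] at h1
    have h2 : (2 : ℝ) ^ n * f = ee (i + 1) * 2 ^ (2 * (i + 1) + 1) := by
      rw [← hns, pow_add, hf]; ring
    rw [hT, h1, h2]
    apply mul_le_mul_of_nonneg_left _ (ee_pos _).le
    linarith [w_ge (i + 1)]
  set c : ℤ := round (x * f) with hc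
  have hr := abs_le.1 (abs_sub_round (x * f))
  rw [← hc] at hr
  let G : ℤ → ℝ → ℝ≥0∞ := fun c ξ => ENNReal.ofReal (P ((i + 1) ^ 2) ξ ^ p) *
    ENNReal.ofReal ((2 / (1 + |ξ - c / f| * T)) ^ p)
  have hG : ∀ c, ∫⁻ ξ, G c ξ ≤ 2 * (B * (((i + 4 : ℕ) : ℝ≥0∞) * (ENNReal.ofReal (2 ^ p) * zt p))) :=
    fun c => full_bound p hp _ _ (1 / ee i) T (one_div_pos.2 (ee_pos i)) (i + 4) (by omega) hTh B hB
  have hPG : ∀ (c : ℤ) (ξ : ℝ), |ξ * f - c| ≤ 1 / 2 →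
      ENNReal.ofReal (P ((i + 1) ^ 2 + n) ξ ^ p) ≤ G c ξ := by
    intro c ξ h
    have h' : |ξ - c / f| ≤ 1 / (2 * f) := by
      have : ξ - c / f = (ξ * f - c) / f := by field_simp
      rw [this, abs_div, abs_of_pos hf0, div_le_iff₀ hf0]
      refine h.trans (le_of_eq ?_)
      field_simp
    have hD := D_bound n f T hf0 hT0 hTf c ξ h'
    simp only [G]
    rw [P_split (i + 1) n s hns, ← ENNReal.ofReal_mul (by positivity [P_nonneg ((i + 1) ^ 2) ξ]),
      Real.mul_rpow (P_nonneg _ _) (Finset.prod_nonneg fun _ _ => abs_nonneg _)]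
    apply ENNReal.ofReal_le_ofReal
    apply mul_le_mul_of_nonneg_left _ (Real.rpow_nonneg (P_nonneg _ _) _)
    exact Real.rpow_le_rpow (Finset.prod_nonneg fun _ _ => abs_nonneg _) hD (by linarith)
  have hmeas : Measurable (G c) := by
    have := P_meas ((i + 1) ^ 2)
    simp only [G]
    fun_prop
  calc _ ≤ ∫⁻ ξ in Set.Ioc x (x + 1 / f), (G c ξ + G (c + 1) ξ) := by
        apply setLIntegral_mono' measurableSet_Ioc
        intro ξ hξ
        have h1 : x * f < ξ * f := mul_lt_mul_of_pos_right hξ.1 hf0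
        have h2 : ξ * f ≤ x * f + 1 := by
          calc ξ * f ≤ (x + 1 / f) * f := mul_le_mul_of_nonneg_right hξ.2 hf0.le
            _ = _ := by field_simp
        rcases le_total (ξ * f) (c + 1 / 2) with h | h
        · refine (hPG c ξ ?_).trans le_self_add
          rw [abs_le]; constructor <;> linarith [hr.1, hr.2]
        · refine (hPG (c + 1) ξ ?_).trans le_add_self
          rw [abs_le]; push_cast; constructor <;> linarith [hr.1, hr.2]
    _ ≤ ∫⁻ ξ, (G c ξ + G (c + 1) ξ) := setLIntegral_le_lintegral _ _
    _ = (∫⁻ ξ, G c ξ) + ∫⁻ ξ, G (c + 1) ξ := lintegral_add_left hmeas _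
    _ ≤ _ := add_le_add (hG _) (hG _)
    _ = _ := by unfold K; ring

lemma iter (p : ℝ) (hp : 1 < p) (i : ℕ) (x : ℝ) :
    ∫⁻ ξ in Set.Ioc x (x + 1 / ee i), ENNReal.ofReal (P ((i + 1) ^ 2) ξ ^ p) ≤
      ENNReal.ofReal (1 / ee 0) * (K p ^ i * ENNReal.ofReal (Q i)) := by
  induction i generalizing x with
  | zero =>
    calc _ ≤ ∫⁻ ξ in Set.Ioc x (x + 1 / ee 0), 1 := by
          apply setLIntegral_mono' measurableSet_Ioc
          intro ξ _
          rw [ENNReal.ofReal_le_one]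
          exact Real.rpow_le_one (P_nonneg _ _) (P_le_one _ _) (by linarith)
      _ = _ := by simp [Q]
  | succ i ih =>
    have h := step p hp i (2 * (i + 1) + 1) 0 (by omega) _ ih x
    have e : (i + 1) ^ 2 + (2 * (i + 1) + 1) = (i + 1 + 1) ^ 2 := by ring
    rw [e, pow_zero, mul_one] at h
    refine h.trans (le_of_eq ?_)
    rw [Q_succ, ENNReal.ofReal_mul (Q_pos i).le]
    have : ENNReal.ofReal ((i : ℝ) + 4) = ((i + 4 : ℕ) : ℝ≥0∞) := by
      rw [← ENNReal.ofReal_natCast]; push_cast; rfl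
    rw [this]
    ring

/-- the `k`-th term -/
noncomputable def f (k : ℕ) (ξ : ℝ) : ℝ :=
  2 ^ k * Theta th k / (1 + (1 - 2 * th k) * Theta th k * ξ) * P k ξ

lemma term_bound (p : ℝ) (hp : 1 < p) (i n s : ℕ) (hns : n + s = 2 * (i + 1) + 1) (hs : 1 ≤ s)
    (hs3 : s ≤ 3) :
    ∫⁻ ξ in Set.Ioi (0 : ℝ), ENNReal.ofReal (f ((i + 1) ^ 2 + n) ξ ^ p) ≤
      ENNReal.ofReal (1 / ee 0) * zt p * ENNReal.ofReal (16 ^ p) *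
        ((K p * ENNReal.ofReal (2 ^ p)) ^ (i + 1) * ENNReal.ofReal (Q (i + 1) ^ (1 - p))) := by
  set k := (i + 1) ^ 2 + n with hk
  have hp0 : 0 ≤ p := by linarith
  have hlo : (1 - 2 * th k) * Theta th k = ee (i + 1) * w (i + 1) :=
    one_sub_two_block (i + 1) n (by omega)
  have hA : A k ≤ 2 ^ (i + 1) / Q (i + 1) :=
    (A_anti (by omega : (i + 1) ^ 2 ≤ k)).trans (A_sq_bounds _).2
  have hA0 := A_pos k
  have he := ee_pos (i + 1)
  have hw := w_ge (i + 1)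
  have hQ := Q_pos (i + 1)
  have h2s : (2 : ℝ) ^ s ≤ 8 := by
    calc (2 : ℝ) ^ s ≤ 2 ^ 3 := pow_le_pow_right₀ (by norm_num) hs3
      _ = 8 := by norm_num
  have hst := step p hp i n s hns _ (iter p hp i)
  set h := 1 / (ee (i + 1) * 2 ^ s) with hh
  have hh0 : 0 < h := by positivity
  have hR := half_right (fun ξ => ENNReal.ofReal (P k ξ ^ p))
    (fun ξ => ENNReal.ofReal ((A k / (1 + ee (i + 1) * w (i + 1) * ξ)) ^ p))
    (fun m => ENNReal.ofReal ((16 * A k) ^ p) * ENNReal.ofReal ((1 / (1 + (m : ℝ))) ^ p)) 0 h hh0 _ hst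
    (fun m => ENNReal.mul_ne_top ENNReal.ofReal_ne_top ENNReal.ofReal_ne_top) ?_
  · have e1 : ∫⁻ ξ in Set.Ioi (0 : ℝ), ENNReal.ofReal (f k ξ ^ p) =
        ∫⁻ ξ in Set.Ioi (0 : ℝ), ENNReal.ofReal (P k ξ ^ p) *
          ENNReal.ofReal ((A k / (1 + ee (i + 1) * w (i + 1) * ξ)) ^ p) := by
      apply setLIntegral_congr_fun measurableSet_Ioi
      intro ξ hξ
      have hξ : 0 < ξ := hξ
      have hd : 0 ≤ A k / (1 + ee (i + 1) * w (i + 1) * ξ) := by positivity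
      simp only
      rw [← ENNReal.ofReal_mul (Real.rpow_nonneg (P_nonneg _ _) _),
        ← Real.mul_rpow (P_nonneg _ _) hd, f, hlo, mul_comm (P k ξ)]
      rfl
    rw [e1]
    refine hR.trans ?_
    rw [ENNReal.tsum_mul_left, ← zt]
    have hQA : ENNReal.ofReal ((16 * A k) ^ p) ≤ ENNReal.ofReal (16 ^ p) *
        (ENNReal.ofReal (2 ^ p) ^ (i + 1) * ENNReal.ofReal (Q (i + 1) ^ (-p))) := by
      rw [← ENNReal.ofReal_pow (by positivity), ← ENNReal.ofReal_mul (by positivity),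
        ← ENNReal.ofReal_mul (by positivity)]
      apply ENNReal.ofReal_le_ofReal
      calc (16 * A k) ^ p ≤ (16 * (2 ^ (i + 1) / Q (i + 1))) ^ p := by gcongr
        _ = _ := by
          rw [Real.mul_rpow (by norm_num) (by positivity), Real.div_rpow (by positivity) hQ.le,
            Real.rpow_neg hQ.le, ← Real.rpow_natCast, ← Real.rpow_natCast, ← Real.rpow_mul (by norm_num),
            ← Real.rpow_mul (by norm_num), mul_comm p]
          rfl
    have hq : ENNReal.ofReal (Q i) * ((i + 4 : ℕ) : ℝ≥0∞) = ENNReal.ofReal (Q (i + 1)) := by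
      rw [Q_succ, ENNReal.ofReal_mul (Q_pos i).le]
      congr 1
      rw [← ENNReal.ofReal_natCast]; push_cast; rfl
    have hq2 : ENNReal.ofReal (Q (i + 1) ^ (1 - p)) =
        ENNReal.ofReal (Q (i + 1)) * ENNReal.ofReal (Q (i + 1) ^ (-p)) := by
      rw [← ENNReal.ofReal_mul hQ.le, sub_eq_add_neg, Real.rpow_add hQ, Real.rpow_one]
    rw [hq2, ← hq]
    refine (mul_le_mul_right (mul_le_mul_left hQA _) _).trans (le_of_eq ?_)
    rw [mul_pow, pow_succ (K p)]
    ring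
  · intro m ξ hm
    rw [← ENNReal.ofReal_mul (by positivity), ← Real.mul_rpow (by positivity) (by positivity)]
    apply ENNReal.ofReal_le_ofReal
    have hm0 : (0 : ℝ) ≤ m := by positivity
    have hξ : 0 < ξ := lt_of_le_of_lt (by positivity) hm
    apply Real.rpow_le_rpow (by positivity) _ hp0
    rw [mul_one_div, div_le_div_iff₀ (by positivity) (by positivity)]
    have h3 : (m : ℝ) * (3 / 32) ≤ ee (i + 1) * w (i + 1) * ξ := by
      have hmh : (m : ℝ) ≤ ee (i + 1) * 2 ^ s * ξ := by
        rw [zero_add, hh, mul_one_div, div_lt_iff₀ (by positivity)] at hm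
        linarith
      have h4 : ee (i + 1) * 2 ^ s * ξ ≤ ee (i + 1) * ξ * 8 := by
        have : 0 < ee (i + 1) * ξ := by positivity
        nlinarith
      have h5 : ee (i + 1) * ξ * (3 / 4) ≤ ee (i + 1) * w (i + 1) * ξ := by
        have : 0 < ee (i + 1) * ξ := by positivity
        nlinarith
      linarith
    have : A k * (1 + m) ≤ A k * (16 * (1 + ee (i + 1) * w (i + 1) * ξ)) := by
      apply mul_le_mul_of_nonneg_left _ hA0.le
      linarith
    linarith

/-- the index set -/
def SS : Set ℕ := {k | ∃ i n s : ℕ, n + s = 2 * (i + 1) + 1 ∧ 2 ≤ s ∧ s ≤ 3 ∧ k = (i + 1) ^ 2 + n}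

lemma growth (p : ℝ) (hp : 1 < p) (R : ℝ) (hR : 0 ≤ R) :
    ∃ M : ℝ, 0 ≤ M ∧ ∀ i, R ^ i * Q i ^ (1 - p) ≤ M := by
  have hp' : 0 < p - 1 := by linarith
  have h := FloorSemiring.tendsto_pow_div_factorial_atTop (R ^ (1 / (p - 1)))
  obtain ⟨M, hM⟩ := h.bddAbove_range
  have hM : ∀ i : ℕ, (R ^ (1 / (p - 1))) ^ i / (i.factorial : ℝ) ≤ M := fun i => hM ⟨i, rfl⟩
  have hM0 : 0 ≤ M := le_trans (by positivity) (hM 0)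
  refine ⟨M ^ (p - 1), by positivity, fun i => ?_⟩
  have h1 : R ^ i * Q i ^ (1 - p) ≤ ((R ^ (1 / (p - 1))) ^ i / (i.factorial : ℝ)) ^ (p - 1) := by
    have hf : (0 : ℝ) < i.factorial := by exact_mod_cast i.factorial_pos
    rw [Real.div_rpow (by positivity) hf.le, ← Real.rpow_natCast (R ^ (1 / (p - 1))),
      ← Real.rpow_mul hR, ← Real.rpow_mul hR]
    have : 1 / (p - 1) * i * (p - 1) = i := by field_simp
    rw [this, Real.rpow_natCast, div_eq_mul_inv, ← Real.rpow_neg hf.le, neg_sub]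
    apply mul_le_mul_of_nonneg_left _ (by positivity)
    exact Real.rpow_le_rpow_of_nonpos hf (fact_le_Q i) (by linarith)
  exact h1.trans (Real.rpow_le_rpow (by positivity) (hM i) hp'.le)

lemma K_ne_top (p : ℝ) (hp : 1 < p) : K p ≠ ⊤ :=
  ENNReal.mul_ne_top (by norm_num) (ENNReal.mul_ne_top ENNReal.ofReal_ne_top (zt_ne_top p hp))

/-- summed bound -/
lemma term_decay (p : ℝ) (hp : 1 < p) (hp2 : p ≤ 2) : ∃ C : ℝ≥0∞, C ≠ ⊤ ∧ ∀ k ∈ SS,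
    ENNReal.ofReal (((k : ℝ) + 1) ^ 2) ^ p *
      ∫⁻ ξ in Set.Ioi (0 : ℝ), ENNReal.ofReal (f k ξ ^ p) ≤
      C * ENNReal.ofReal ((1 / (1 + (k : ℝ))) ^ (2 : ℝ)) := by
  set R0 := (K p * ENNReal.ofReal (2 ^ p)) with hR0
  have hR0t : R0 ≠ ⊤ := ENNReal.mul_ne_top (K_ne_top p hp) ENNReal.ofReal_ne_top
  obtain ⟨M, hM0, hM⟩ := growth p hp (R0.toReal * 4 ^ 6) (by positivity)
  set C1 := ENNReal.ofReal (1 / ee 0) * zt p * ENNReal.ofReal (16 ^ p) with hC1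
  have hC1t : C1 ≠ ⊤ := ENNReal.mul_ne_top
    (ENNReal.mul_ne_top ENNReal.ofReal_ne_top (zt_ne_top p hp)) ENNReal.ofReal_ne_top
  refine ⟨C1 * ENNReal.ofReal M, ENNReal.mul_ne_top hC1t ENNReal.ofReal_ne_top, ?_⟩
  rintro k ⟨i, n, s, hns, hs, hs3, rfl⟩
  have hb := term_bound p hp i n s hns (by omega) hs3
  set k := (i + 1) ^ 2 + n with hk
  have hk4 : (k : ℝ) + 1 ≤ 4 ^ (i + 1) := by
    have h1 : k + 1 ≤ (i + 1 + 1) ^ 2 := by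
      have : (i + 1 + 1) ^ 2 = (i + 1) ^ 2 + (2 * (i + 1) + 1) := by ring
      omega
    have h2 : i + 1 + 1 ≤ 2 ^ (i + 1) := Nat.lt_two_pow_self
    have h3 : k + 1 ≤ 4 ^ (i + 1) := by
      calc k + 1 ≤ (i + 1 + 1) ^ 2 := h1
        _ ≤ (2 ^ (i + 1)) ^ 2 := Nat.pow_le_pow_left h2 2
        _ = (2 ^ 2) ^ (i + 1) := by rw [← pow_mul, ← pow_mul, mul_comm]
        _ = 4 ^ (i + 1) := by norm_num
    exact_mod_cast h3
  have hk0 : (1 : ℝ) ≤ (k : ℝ) + 1 := by linarith [(Nat.cast_nonneg k : (0 : ℝ) ≤ k)]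
  have hw : ENNReal.ofReal (((k : ℝ) + 1) ^ 2) ^ p ≤ ENNReal.ofReal (((k : ℝ) + 1) ^ 4) := by
    rw [ENNReal.ofReal_rpow_of_nonneg (by positivity) (by linarith)]
    apply ENNReal.ofReal_le_ofReal
    calc (((k : ℝ) + 1) ^ 2) ^ p ≤ (((k : ℝ) + 1) ^ 2) ^ (2 : ℝ) :=
          Real.rpow_le_rpow_of_exponent_le (one_le_pow₀ hk0) hp2
      _ = _ := by rw [Real.rpow_two]; ring
  refine (mul_le_mul' hw hb).trans ?_
  have hR : R0 ^ (i + 1) = ENNReal.ofReal (R0.toReal ^ (i + 1)) := by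
    rw [ENNReal.ofReal_pow ENNReal.toReal_nonneg, ENNReal.ofReal_toReal hR0t]
  have hQ := Q_pos (i + 1)
  have hQp : 0 ≤ Q (i + 1) ^ (1 - p) := Real.rpow_nonneg hQ.le _
  rw [hR, ← ENNReal.ofReal_mul (by positivity), mul_left_comm, mul_assoc C1,
    ← ENNReal.ofReal_mul (by positivity), ← ENNReal.ofReal_mul hM0]
  apply mul_le_mul_right
  apply ENNReal.ofReal_le_ofReal
  rw [Real.rpow_two, div_pow, one_pow, mul_one_div, le_div_iff₀ (by positivity)]
  calc ((k : ℝ) + 1) ^ 4 * (R0.toReal ^ (i + 1) * Q (i + 1) ^ (1 - p)) * (1 + (k : ℝ)) ^ 2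
      = ((k : ℝ) + 1) ^ 6 * (R0.toReal ^ (i + 1) * Q (i + 1) ^ (1 - p)) := by ring
    _ ≤ (4 ^ (i + 1)) ^ 6 * (R0.toReal ^ (i + 1) * Q (i + 1) ^ (1 - p)) := by
        apply mul_le_mul_of_nonneg_right _ (by positivity)
        exact pow_le_pow_left₀ (by positivity) hk4 6
    _ = (R0.toReal * 4 ^ 6) ^ (i + 1) * Q (i + 1) ^ (1 - p) := by
        rw [mul_pow, ← pow_mul, ← pow_mul, mul_comm (i + 1)]; ring
    _ ≤ M := hM _

/-- weighted replacement of Minkowski -/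
lemma tsum_rpow_le (p : ℝ) (hp : 1 < p) (S : Set ℕ) (a : S → ℝ≥0∞) :
    (∑' k, a k) ^ p ≤ zt 2 ^ p * ∑' k : S, ENNReal.ofReal (((k : ℝ) + 1) ^ 2) ^ p * a k ^ p := by
  have hp0 : 0 < p := by linarith
  set X := ∑' k : S, ENNReal.ofReal (((k : ℝ) + 1) ^ 2) ^ p * a k ^ p with hX
  have h1 : ∀ k : S, a k ≤ X ^ (1 / p) * ENNReal.ofReal ((1 / (1 + (k : ℝ))) ^ (2 : ℝ)) := by
    intro k
    have h2 : ENNReal.ofReal (((k : ℝ) + 1) ^ 2) * a k ≤ X ^ (1 / p) := by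
      rw [one_div, ENNReal.le_rpow_inv_iff hp0, ENNReal.mul_rpow_of_nonneg _ _ hp0.le]
      exact ENNReal.le_tsum k
    calc a k = ENNReal.ofReal (((k : ℝ) + 1) ^ 2) * a k *
          ENNReal.ofReal ((1 / (1 + (k : ℝ))) ^ (2 : ℝ)) := by
          rw [mul_right_comm, ← ENNReal.ofReal_mul (by positivity)]
          have : ((k : ℝ) + 1) ^ 2 * (1 / (1 + (k : ℝ))) ^ (2 : ℝ) = 1 := by
            have : (1 + (k : ℝ)) ≠ 0 := by positivity
            rw [Real.rpow_two]; field_simp; ring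
          rw [this]; simp
      _ ≤ _ := mul_le_mul_left h2 _
  have h3 : ∑' k, a k ≤ X ^ (1 / p) * zt 2 := by
    refine (ENNReal.tsum_le_tsum h1).trans ?_
    rw [ENNReal.tsum_mul_left]
    apply mul_le_mul_right
    exact ENNReal.tsum_comp_le_tsum_of_injective Subtype.val_injective
      (fun k : ℕ => ENNReal.ofReal ((1 / (1 + (k : ℝ))) ^ (2 : ℝ)))
  calc _ ≤ (X ^ (1 / p) * zt 2) ^ p := ENNReal.rpow_le_rpow h3 hp0.le
    _ = _ := by
      rw [ENNReal.mul_rpow_of_nonneg _ _ hp0.le, ← ENNReal.rpow_mul, one_div_mul_cancel hp0.ne',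
        ENNReal.rpow_one, mul_comm]

lemma f_nonneg (k : ℕ) (ξ : ℝ) (hξ : 0 < ξ) : 0 ≤ f k ξ := by
  unfold f
  have h1 := Theta_pos k
  have h2 : 0 ≤ 1 - 2 * th k := by linarith [(th_mem k).2]
  have h3 := P_nonneg k ξ
  positivity

lemma f_meas (k : ℕ) : Measurable (f k) := by
  have := P_meas k
  unfold f
  fun_prop

lemma integral_finite (p : ℝ) (hp : 1 < p) (hp2 : p ≤ 2) :
    (∫⁻ ξ in Set.Ioi (0 : ℝ), ENNReal.ofReal (Hfun th SS ξ ^ p)) < ⊤ := by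
  have hp0 : 0 < p := by linarith
  obtain ⟨C, hC, hk⟩ := term_decay p hp hp2
  have hpt : ∀ ξ ∈ Set.Ioi (0 : ℝ), ENNReal.ofReal (Hfun th SS ξ ^ p) ≤
      zt 2 ^ p * ∑' k : SS, ENNReal.ofReal (((k : ℝ) + 1) ^ 2) ^ p * ENNReal.ofReal (f k ξ ^ p) := by
    intro ξ hξ
    have hξ : 0 < ξ := hξ
    have hH : Hfun th SS ξ = ∑' k : SS, f k ξ := rfl
    have hf : ∀ k : SS, 0 ≤ f k ξ := fun k => f_nonneg k ξ hξ
    have h0 : 0 ≤ Hfun th SS ξ := by rw [hH]; exact tsum_nonneg hf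
    have h1 : ENNReal.ofReal (Hfun th SS ξ) ≤ ∑' k : SS, ENNReal.ofReal (f k ξ) := by
      rw [hH]
      by_cases hs : Summable fun k : SS => f k ξ
      · rw [ENNReal.ofReal_tsum_of_nonneg hf hs]
      · rw [tsum_eq_zero_of_not_summable hs]; simp
    rw [← ENNReal.ofReal_rpow_of_nonneg h0 hp0.le]
    refine (ENNReal.rpow_le_rpow h1 hp0.le).trans ?_
    refine (tsum_rpow_le p hp SS _).trans (le_of_eq ?_)
    congr 2
    ext k
    rw [ENNReal.ofReal_rpow_of_nonneg (hf k) hp0.le]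
  have hmeas : ∀ k, Measurable fun ξ => ENNReal.ofReal (f k ξ ^ p) := by
    intro k
    have := f_meas k
    fun_prop
  have hz : zt 2 ^ p ≠ ⊤ := ENNReal.rpow_ne_top_of_nonneg hp0.le (zt_ne_top 2 (by norm_num))
  calc _ ≤ ∫⁻ ξ in Set.Ioi (0 : ℝ), zt 2 ^ p *
        ∑' k : SS, ENNReal.ofReal (((k : ℝ) + 1) ^ 2) ^ p * ENNReal.ofReal (f k ξ ^ p) :=
        setLIntegral_mono' measurableSet_Ioi hpt
    _ = zt 2 ^ p * ∑' k : SS, ENNReal.ofReal (((k : ℝ) + 1) ^ 2) ^ p *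
        ∫⁻ ξ in Set.Ioi (0 : ℝ), ENNReal.ofReal (f k ξ ^ p) := by
        rw [lintegral_const_mul' _ _ hz, lintegral_tsum]
        · congr 2
          ext k
          rw [lintegral_const_mul _ (hmeas k)]
        · intro k
          exact ((hmeas k).const_mul _).aemeasurable
    _ ≤ zt 2 ^ p * ∑' k : SS, C * ENNReal.ofReal ((1 / (1 + ((k : ℕ) : ℝ))) ^ (2 : ℝ)) := by
        apply mul_le_mul_right
        exact ENNReal.tsum_le_tsum fun k => hk k k.2
    _ ≤ zt 2 ^ p * (C * zt 2) := by
        rw [ENNReal.tsum_mul_left]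
        apply mul_le_mul_right
        apply mul_le_mul_right
        exact ENNReal.tsum_comp_le_tsum_of_injective Subtype.val_injective
          (fun k : ℕ => ENNReal.ofReal ((1 / (1 + (k : ℝ))) ^ (2 : ℝ)))
    _ < ⊤ := ENNReal.mul_lt_top hz.lt_top
        (ENNReal.mul_lt_top hC.lt_top (zt_ne_top 2 (by norm_num)).lt_top)

lemma part_b : ∃ ε > (0 : ℝ), ∀ N : ℕ, ∃ j ≥ N, j ∈ SS ∧ j + 1 ∈ SS ∧
    th j ∈ Set.Ioo ε (1 / 2 - ε) ∧ th (j + 1) ∈ Set.Ioo ε (1 / 2 - ε) := by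
  refine ⟨1 / 30, by norm_num, fun N => ⟨(N + 1) ^ 2 + 2 * N, by nlinarith, ?_, ?_, ?_, ?_⟩⟩
  · exact ⟨N, 2 * N, 3, by ring, by norm_num, le_rfl, rfl⟩
  · exact ⟨N, 2 * N + 1, 2, by ring, le_rfl, by norm_num, by ring⟩
  · have h1 := w_lt (N + 1)
    have h2 := w_ge (N + 1)
    rw [th_block (N + 1) (2 * N) (by omega)]
    have e1 : 2 * (N + 1) - 2 * N = 2 := by omega
    have e2 : 2 * (N + 1) + 1 - 2 * N = 3 := by omega
    rw [e1, e2]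
    have h3 : (0 : ℝ) < 2 ^ 3 - w (N + 1) := pow_sub_w_pos _ _
    constructor
    · rw [lt_div_iff₀ h3]; linarith
    · rw [div_lt_iff₀ h3]; linarith
  · have h1 := w_lt (N + 1)
    have h2 := w_ge (N + 1)
    rw [add_assoc, th_block (N + 1) (2 * N + 1) (by omega)]
    have e1 : 2 * (N + 1) - (2 * N + 1) = 1 := by omega
    have e2 : 2 * (N + 1) + 1 - (2 * N + 1) = 2 := by omega
    rw [e1, e2]
    have h3 : (0 : ℝ) < 2 ^ 2 - w (N + 1) := pow_sub_w_pos _ _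
    constructor
    · rw [lt_div_iff₀ h3]; linarith
    · rw [div_lt_iff₀ h3]; linarith

end Dissect

/-- **Choice of parameters.** There are a set `S` of nonnegative integers and dissection
ratios `θ_j ∈ (0,1/2)` such that: (a) `Θ_k^{1/k} → 1/2`; (b) there is `ε > 0` with
`θ_j, θ_{j+1} ∈ (ε, 1/2-ε)` for infinitely many `j ∈ S` with `j+1 ∈ S`; and (c) for every
`p ∈ (1,2]`, `∫_0^∞ H(ξ)^p dξ < ∞`. -/
theorem exists_parameters :
    ∃ (S : Set ℕ) (θ : ℕ → ℝ), (∀ j, θ j ∈ Set.Ioo (0 : ℝ) (1 / 2)) ∧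
      Tendsto (fun k : ℕ => Theta θ k ^ ((1 : ℝ) / k)) atTop (nhds (1 / 2)) ∧
      (∃ ε > (0 : ℝ), ∀ N : ℕ, ∃ j ≥ N, j ∈ S ∧ j + 1 ∈ S ∧
        θ j ∈ Set.Ioo ε (1 / 2 - ε) ∧ θ (j + 1) ∈ Set.Ioo ε (1 / 2 - ε)) ∧
      ∀ p : ℝ, 1 < p → p ≤ 2 →
        (∫⁻ ξ in Set.Ioi (0 : ℝ), ENNReal.ofReal (Hfun θ S ξ ^ p)) < ⊤ := by
  exact ⟨Dissect.SS, Dissect.th, Dissect.th_mem, Dissect.tendsto_a, Dissect.part_b,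
    fun p hp hp2 => Dissect.integral_finite p hp hp2⟩
end

section
/- Let S be a set of nonnegative integers, let w : S → {2,3,4,…}, and let (α_j)_{j≥0} be real numbers with 0 < 2α_{j+1} ≤ α_j ≤ 1/4 for all j ≥ 0. Define θ_j = 2^{−w(j)} for j ∈ S and θ_j = (1−α_j)/2 for j ∉ S, and set w^+(k) = ∑_{j∈S, j<k} w(j), χ^+(k) = #(S ∩ [0,k−1]) and k* = k + w^+(k) − χ^+(k). Then: (a) 2^{−k*−1} ≤ Θ_k ≤ 2^{−k*} for every k ≥ 0; and (b) for all integers 0 ≤ r ≤ j, (1 − 2α_r) 2^{−(j* − r*)} ≤ Θ_j / Θ_r ≤ 2^{−(j* − r*)}. -/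
/-- `w⁺(k) = ∑_{j∈S, j<k} w(j)`. -/
noncomputable def wplus (S : Set ℕ) (w : ℕ → ℕ) (k : ℕ) : ℕ :=
  ∑ j ∈ Finset.range k, S.indicator w j

/-- `χ⁺(k) = #(S ∩ [0,k-1])`. -/
noncomputable def chiplus (S : Set ℕ) (k : ℕ) : ℕ :=
  ∑ j ∈ Finset.range k, S.indicator (fun _ => 1) j

/-- `k* = k + w⁺(k) − χ⁺(k)` (as an integer). -/
noncomputable def kstar (S : Set ℕ) (w : ℕ → ℕ) (k : ℕ) : ℤ :=
  (k : ℤ) + (wplus S w k : ℤ) - (chiplus S k : ℤ)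

lemma kstar_succ_mem (S : Set ℕ) (w : ℕ → ℕ) (k : ℕ) (h : k ∈ S) :
    kstar S w (k + 1) = kstar S w k + w k := by
  simp only [kstar, wplus, chiplus, Finset.sum_range_succ, Set.indicator_of_mem h]
  push_cast
  ring

lemma kstar_succ_notMem (S : Set ℕ) (w : ℕ → ℕ) (k : ℕ) (h : k ∉ S) :
    kstar S w (k + 1) = kstar S w k + 1 := by
  simp only [kstar, wplus, chiplus, Finset.sum_range_succ, Set.indicator_of_notMem h]
  push_cast
  ring

/-- **Asymptotics of products of dissection ratios.** With `θ_j = 2^{-w(j)}` for `j ∈ S` and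
`θ_j = (1-α_j)/2` for `j ∉ S`, where `w ≥ 2` on `S` and `0 < 2α_{j+1} ≤ α_j ≤ 1/4`:
(a) `2^{-k*-1} ≤ Θ_k ≤ 2^{-k*}` for all `k`; and
(b) `(1-2α_r) 2^{-(j*-r*)} ≤ Θ_j/Θ_r ≤ 2^{-(j*-r*)}` for all `0 ≤ r ≤ j`. -/
theorem Theta_bounds (S : Set ℕ) (w : ℕ → ℕ) (hw : ∀ j ∈ S, 2 ≤ w j)
    (α : ℕ → ℝ) (hα0 : ∀ j, 0 < α j) (hα1 : ∀ j, 2 * α (j + 1) ≤ α j)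
    (hα2 : ∀ j, α j ≤ 1 / 4)
    (θ : ℕ → ℝ) (hθS : ∀ j ∈ S, θ j = (2 : ℝ) ^ (-(w j : ℤ)))
    (hθS' : ∀ j ∉ S, θ j = (1 - α j) / 2) :
    (∀ k : ℕ, (2 : ℝ) ^ (-(kstar S w k) - 1) ≤ Theta θ k ∧
      Theta θ k ≤ (2 : ℝ) ^ (-(kstar S w k))) ∧
    (∀ r j : ℕ, r ≤ j →
      (1 - 2 * α r) * (2 : ℝ) ^ (-(kstar S w j - kstar S w r)) ≤ Theta θ j / Theta θ r ∧
      Theta θ j / Theta θ r ≤ (2 : ℝ) ^ (-(kstar S w j - kstar S w r))) := by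
  have h2 : (2 : ℝ) ≠ 0 := two_ne_zero
  set P : ℕ → ℝ := fun k => Theta θ k * (2 : ℝ) ^ (kstar S w k) with hP
  have hstep : ∀ k, ∃ c : ℝ, 1 - α k ≤ c ∧ c ≤ 1 ∧ P (k + 1) = c * P k := by
    intro k
    by_cases h : k ∈ S
    · refine ⟨1, by linarith [hα0 k], le_rfl, ?_⟩
      have e : (2 : ℝ) ^ (-(w k : ℤ)) * (2 : ℝ) ^ (w k : ℤ) = 1 := by
        rw [← zpow_add₀ h2]; simp
      simp only [hP, Theta, Finset.prod_range_succ, kstar_succ_mem S w k h, hθS k h,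
        zpow_add₀ h2]
      linear_combination ((∏ x ∈ Finset.range k, θ x) * (2 : ℝ) ^ (kstar S w k)) * e
    · refine ⟨1 - α k, le_rfl, by linarith [hα0 k], ?_⟩
      simp only [hP, Theta, Finset.prod_range_succ, kstar_succ_notMem S w k h, hθS' k h,
        zpow_add₀ h2, zpow_one]
      ring
  have hP0 : P 0 = 1 := by simp [hP, Theta, kstar, wplus, chiplus]
  have hpos : ∀ k, 0 < P k := by
    intro k
    induction k with
    | zero => rw [hP0]; exact one_pos
    | succ k ih =>
      obtain ⟨c, h1, _, h3⟩ := hstep k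
      rw [h3]
      exact mul_pos (by linarith [hα2 k]) ih
  have key : ∀ r j, r ≤ j → α j ≤ α r ∧ (1 - 2 * α r + 2 * α j) * P r ≤ P j ∧ P j ≤ P r := by
    intro r j hrj
    induction j, hrj using Nat.le_induction with
    | base => exact ⟨le_rfl, by linarith, le_rfl⟩
    | succ j _ ih =>
      obtain ⟨i1, i2, i3⟩ := ih
      obtain ⟨c, h1, h3, h4⟩ := hstep j
      have hj := hα0 j
      have hj' := hα2 j
      have hs := hα1 j
      have hr := hpos r
      have hPj := hpos j
      refine ⟨by linarith [hα0 (j + 1)], ?_, ?_⟩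
      · rw [h4]
        calc (1 - 2 * α r + 2 * α (j + 1)) * P r
            ≤ ((1 - α j) * (1 - 2 * α r + 2 * α j)) * P r := by
              apply mul_le_mul_of_nonneg_right _ hr.le
              nlinarith [mul_nonneg hj.le (sub_nonneg.2 i1)]
          _ = (1 - α j) * ((1 - 2 * α r + 2 * α j) * P r) := by ring
          _ ≤ (1 - α j) * P j := mul_le_mul_of_nonneg_left i2 (by linarith)
          _ ≤ c * P j := mul_le_mul_of_nonneg_right h1 hPj.le
      · rw [h4]
        nlinarith
  have hT : ∀ k, Theta θ k = P k * (2 : ℝ) ^ (-(kstar S w k)) := by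
    intro k
    simp only [hP]
    rw [mul_assoc, ← zpow_add₀ h2]; simp
  constructor
  · intro k
    obtain ⟨_, k2, k3⟩ := key 0 k (Nat.zero_le k)
    rw [hP0] at k2 k3
    have hz : (0 : ℝ) < (2 : ℝ) ^ (-(kstar S w k)) := by positivity
    rw [hT k, zpow_sub₀ h2, zpow_one]
    constructor
    · nlinarith [hα2 0, hα0 k]
    · nlinarith
  · intro r j hrj
    obtain ⟨_, k2, k3⟩ := key r j hrj
    have hr := hpos r
    have hz : (0 : ℝ) < (2 : ℝ) ^ (-(kstar S w j - kstar S w r)) := by positivity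
    have e : Theta θ j / Theta θ r = (P j / P r) * (2 : ℝ) ^ (-(kstar S w j - kstar S w r)) := by
      rw [hT j, hT r, mul_div_mul_comm, ← zpow_sub₀ h2]
      congr 2
      ring
    rw [e]
    constructor
    · apply mul_le_mul_of_nonneg_right _ hz.le
      rw [le_div_iff₀ hr]
      nlinarith [mul_pos (hα0 j) hr]
    · have : P j / P r ≤ 1 := (div_le_one hr).2 k3
      nlinarith
end
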